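/- The expected number of constructors not suspended under a closure in a uniformly random λυ-term of size n converges to the constant 316/3 as n → ∞. In particular, the expected proportion of non-suspended constructors tends to 0. -/

import Mathlib

open Finset Filter

mutual
inductive Tm : Type
  | idx : Nat → Tm
  | lam : Tm → Tm
  | app : Tm → Tm → Tm
  | clos : Tm → Subst → Tm
inductive Subst : Type
  | slash : Tm → Subst
  | lift : Subst → Subst
  | shift : Subst
end

mutual
/-- Natural size of a λυ-term: every constructor weighs 1; index n has size n+1. -/
def Tm.size : Tm → Nat
  | .idx n => n + 1
  | .lam a => Tm.size a + 1
  | .app a b => Tm.size a + Tm.size b + 1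
  | .clos a s => Tm.size a + Subst.size s + 1
/-- Natural size of an explicit substitution. -/
def Subst.size : Subst → Nat
  | .slash a => Tm.size a + 1
  | .lift s => Subst.size s + 1
  | .shift => 1
end

/-- Number of λυ-terms of size `n`. -/
noncomputable def tcount (n : ℕ) : ℕ := Nat.card {a : Tm // Tm.size a = n}

/-- Number of explicit substitutions of size `n`. -/
noncomputable def scount (n : ℕ) : ℕ := Nat.card {s : Subst // Subst.size s = n}

/-- Expected value of the statistic `f` on a uniformly random λυ-term of size `n`
(the statistic is assumed to be bounded by the size, so summing `k` up to `n` suffices). -/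
noncomputable def expectTm (f : Tm → ℕ) (n : ℕ) : ℝ :=
  (∑ k ∈ Finset.range (n + 1),
      (k : ℝ) * (Nat.card {a : Tm // Tm.size a = n ∧ f a = k} : ℝ)) / (tcount n : ℝ)

/-- Number of constructors of a λυ-term not suspended under any closure
(constructors inside the substitution part of a closure are suspended). -/
def Tm.free : Tm → ℕ
  | .idx n => n + 1
  | .lam a => Tm.free a + 1
  | .app a b => Tm.free a + Tm.free b + 1
  | .clos a _ => Tm.free a + 1


theorem renewal (r ν : ℕ → ℝ) (w : ℕ → ℕ → ℝ) (wc : ℕ → ℝ) (g W ν0 : ℝ)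
    (hw : ∀ n j, j < n → 0 ≤ w n j)
    (hwc : ∀ j, Tendsto (fun n => w n j) atTop (nhds (wc j)))
    (hW : HasSum wc W)
    (hrow : Tendsto (fun n => ∑ j ∈ range n, w n j) atTop (nhds (g + W)))
    (hg0 : 0 ≤ g) (hg1 : g < 1) (hν : Tendsto ν atTop (nhds ν0))
    (hr : ∀ n, r n = ν n + ∑ j ∈ range n, w n j * r j) :
    (∃ M, ∀ n, |r n| ≤ M) ∧
      ∀ V, HasSum (fun j => wc j * r j) V → Tendsto r atTop (nhds ((ν0 + V) / (1 - g))) := by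
  -- row tails
  have hR : ∀ m, Tendsto (fun n => ∑ j ∈ Ico m n, w n j) atTop
      (nhds (g + (W - ∑ j ∈ range m, wc j))) := by
    intro m
    have h1 : Tendsto (fun n => ∑ j ∈ range m, w n j) atTop (nhds (∑ j ∈ range m, wc j)) :=
      tendsto_finsetSum _ fun j _ => hwc j
    have h2 := hrow.sub h1
    rw [add_sub_assoc] at h2
    refine h2.congr' ?_
    filter_upwards [eventually_ge_atTop m] with n hn
    rw [Finset.sum_Ico_eq_sub _ hn]
  have htail : Tendsto (fun m => W - ∑ j ∈ range m, wc j) atTop (nhds 0) := by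
    simpa using (tendsto_const_nhds (x := W)).sub hW.tendsto_sum_nat
  have hhead : ∀ m, Tendsto (fun n => ν n + ∑ j ∈ range m, w n j * r j) atTop
      (nhds (ν0 + ∑ j ∈ range m, wc j * r j)) := fun m =>
    hν.add (tendsto_finsetSum _ fun j _ => (hwc j).mul_const _)
  have hsplit : ∀ m n, m ≤ n → r n = (ν n + ∑ j ∈ range m, w n j * r j)
      + ∑ j ∈ Ico m n, w n j * r j := by
    intro m n hmn
    rw [hr n, add_assoc, Finset.sum_range_add_sum_Ico _ hmn]
  have hbdd : ∃ M, ∀ n, |r n| ≤ M := by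
    obtain ⟨m, hm⟩ := (htail.eventually_lt_const (show (0:ℝ) < (1 - g) / 2 by linarith)).exists
    obtain ⟨n0, hn0⟩ := eventually_atTop.1 ((hR m).eventually_lt_const
      (show g + (W - ∑ j ∈ range m, wc j) < (1 + g) / 2 by linarith))
    obtain ⟨D, hD⟩ := (hhead m).bddAbove_range
    obtain ⟨D', hD'⟩ := (hhead m).bddBelow_range
    have hDD : ∀ n, |ν n + ∑ j ∈ range m, w n j * r j| ≤ |D| + |D'| := by
      intro n
      have h1 := hD (Set.mem_range_self n)
      have h2 := hD' (Set.mem_range_self n)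
      rw [abs_le]
      constructor
      · linarith [neg_abs_le D', abs_nonneg D]
      · linarith [le_abs_self D, abs_nonneg D']
    set E := |D| + |D'| with hE
    have hE0 : 0 ≤ E := by positivity
    refine ⟨2 * E / (1 - g) + ∑ j ∈ range (n0 + m), |r j|, ?_⟩
    set K := 2 * E / (1 - g) + ∑ j ∈ range (n0 + m), |r j| with hK
    have hS0 : 0 ≤ ∑ j ∈ range (n0 + m), |r j| := Finset.sum_nonneg fun _ _ => abs_nonneg _
    have hK1 : 2 * E / (1 - g) ≤ K := by linarith
    have hK0 : 0 ≤ K := le_trans (div_nonneg (by linarith) (by linarith)) hK1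
    intro n
    induction n using Nat.strong_induction_on with
    | _ n ih =>
      by_cases hn : n < n0 + m
      · have : |r n| ≤ ∑ j ∈ range (n0 + m), |r j| :=
          Finset.single_le_sum (f := fun j => |r j|) (fun _ _ => abs_nonneg _) (mem_range.2 hn)
        have : 0 ≤ 2 * E / (1 - g) := div_nonneg (by linarith) (by linarith)
        linarith
      · push Not at hn
        have h1 : |∑ j ∈ Ico m n, w n j * r j| ≤ ∑ j ∈ Ico m n, w n j * K := by
          refine (Finset.abs_sum_le_sum_abs _ _).trans (Finset.sum_le_sum fun j hj => ?_)
          have hj' := mem_Ico.1 hj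
          rw [abs_mul, abs_of_nonneg (hw n j hj'.2)]
          exact mul_le_mul_of_nonneg_left (ih j hj'.2) (hw n j hj'.2)
        rw [← Finset.sum_mul] at h1
        have h2 := hn0 n (by omega)
        have h3 : (∑ j ∈ Ico m n, w n j) * K ≤ (1 + g) / 2 * K :=
          mul_le_mul_of_nonneg_right h2.le hK0
        rw [hsplit m n (by omega)]
        have h4 := abs_add_le (ν n + ∑ j ∈ range m, w n j * r j) (∑ j ∈ Ico m n, w n j * r j)
        have h5 := hDD n
        have h6 : 2 * E ≤ K * (1 - g) := (div_le_iff₀ (by linarith)).1 hK1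
        linarith
  refine ⟨hbdd, ?_⟩
  · intro V hV
    set c := (ν0 + V) / (1 - g) with hc
    have hcg : c * (1 - g) = ν0 + V := div_mul_cancel₀ _ (by linarith)
    have hs : Tendsto (fun m => (ν0 + ∑ j ∈ range m, wc j * r j)
        + c * (g + (W - ∑ j ∈ range m, wc j)) - c) atTop (nhds 0) := by
      have := (((tendsto_const_nhds (x := ν0)).add hV.tendsto_sum_nat).add
        (((tendsto_const_nhds (x := g)).add htail).const_mul c)).sub_const c
      convert this using 2
      linarith
    have hsplit' : ∀ m n, m ≤ n → r n - c = ((ν n + ∑ j ∈ range m, w n j * r j)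
        + c * (∑ j ∈ Ico m n, w n j) - c) + ∑ j ∈ Ico m n, w n j * (r j - c) := by
      intro m n hmn
      rw [hsplit m n hmn, Finset.mul_sum]
      simp only [mul_sub, Finset.sum_sub_distrib]
      simp only [mul_comm c]
      ring
    have hstep : ∀ X > 0, (∀ᶠ n in atTop, |r n - c| ≤ X) →
        ∀ᶠ n in atTop, |r n - c| ≤ (1 + g) / 2 * X := by
      intro X hX hev
      obtain ⟨N, hN⟩ := eventually_atTop.1 hev
      have hη : 0 < (1 - g) * X / 8 := by
        have := mul_pos (sub_pos.2 hg1) hX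
        linarith
      set η := (1 - g) * X / 8 with hηd
      have e1 := (hs.abs).eventually_lt_const (show |(0:ℝ)| < η by simpa using hη)
      have e2 := (htail.mul_const X).eventually_lt_const (show 0 * X < η by simpa using hη)
      obtain ⟨m, ⟨hm1, hm2⟩, hm3⟩ := ((e1.and e2).and (eventually_ge_atTop N)).exists
      have f1 := ((((hhead m).add ((hR m).const_mul c)).sub_const c).abs).eventually_lt_const
        (show _ < 2 * η by linarith)
      have f2 := ((hR m).mul_const X).eventually_lt_const
        (show _ < g * X + 2 * η by linarith)
      filter_upwards [f1, f2, eventually_ge_atTop m] with n h1 h2 h3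
      rw [hsplit' m n h3]
      have h4 : |∑ j ∈ Ico m n, w n j * (r j - c)| ≤ ∑ j ∈ Ico m n, w n j * X := by
        refine (Finset.abs_sum_le_sum_abs _ _).trans (Finset.sum_le_sum fun j hj => ?_)
        have hj' := mem_Ico.1 hj
        rw [abs_mul, abs_of_nonneg (hw n j hj'.2)]
        exact mul_le_mul_of_nonneg_left (hN j (by omega)) (hw n j hj'.2)
      rw [← Finset.sum_mul] at h4
      refine (abs_add_le _ _).trans ?_
      linarith
    obtain ⟨M, hM⟩ := hbdd
    have hM0 : 0 ≤ M := (abs_nonneg _).trans (hM 0)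
    have hX0 : 0 < M + |c| + 1 := by positivity
    have hk : ∀ k : ℕ, ∀ᶠ n in atTop, |r n - c| ≤ ((1 + g) / 2) ^ k * (M + |c| + 1) := by
      intro k
      induction k with
      | zero =>
        refine Eventually.of_forall fun n => ?_
        have := abs_sub (r n) c
        have := hM n
        simp only [pow_zero, one_mul]
        linarith
      | succ k ih =>
        have := hstep _ (by positivity) ih
        rw [pow_succ', mul_assoc]
        exact this
    have hpow : Tendsto (fun k : ℕ => ((1 + g) / 2) ^ k * (M + |c| + 1)) atTop (nhds 0) := by
      simpa using (tendsto_pow_atTop_nhds_zero_of_lt_one (r := (1 + g) / 2) (by linarith)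
        (by linarith)).mul_const (M + |c| + 1)
    rw [Metric.tendsto_nhds]
    intro ε hε
    obtain ⟨k, hk'⟩ := (hpow.eventually_lt_const hε).exists
    filter_upwards [hk k] with n hn
    rw [Real.dist_eq]
    exact lt_of_le_of_lt hn hk'

namespace LU

theorem tm_finite (n : ℕ) : {a : Tm | a.size = n}.Finite ∧ {s : Subst | s.size = n}.Finite := by
  induction n using Nat.strong_induction_on with
  | _ n ih =>
    cases n with
    | zero =>
      constructor
      · convert Set.finite_empty (α := Tm)
        ext a; cases a <;> simp [Tm.size]
      · convert Set.finite_empty (α := Subst)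
        ext a; cases a <;> simp [Subst.size]
    | succ n =>
      have hT : (⋃ i ∈ Set.Iic n, {a : Tm | a.size = i}).Finite :=
        (Set.finite_Iic n).biUnion fun i hi => (ih i (Nat.lt_succ_of_le hi)).1
      have hS : (⋃ i ∈ Set.Iic n, {a : Subst | a.size = i}).Finite :=
        (Set.finite_Iic n).biUnion fun i hi => (ih i (Nat.lt_succ_of_le hi)).2
      constructor
      · refine ((((Set.finite_singleton (Tm.idx n)).union (hT.image Tm.lam)).union
          (hT.image2 Tm.app hT)).union (hT.image2 Tm.clos hS)).subset ?_
        intro a ha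
        cases a <;> simp [Tm.size] at ha ⊢ <;> omega
      · refine (((Set.finite_singleton Subst.shift).union (hT.image Subst.slash)).union
          (hS.image Subst.lift)).subset ?_
        intro a ha
        cases a <;> simp [Subst.size] at ha ⊢ <;> omega

noncomputable def TF (n : ℕ) : Finset Tm := (tm_finite n).1.toFinset
noncomputable def SF (n : ℕ) : Finset Subst := (tm_finite n).2.toFinset

theorem mem_TF {n : ℕ} {a : Tm} : a ∈ TF n ↔ a.size = n := by simp [TF]
theorem mem_SF {n : ℕ} {a : Subst} : a ∈ SF n ↔ a.size = n := by simp [SF]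

theorem TF_zero : TF 0 = ∅ := by
  ext a; rw [mem_TF]; cases a <;> simp [Tm.size]
theorem SF_zero : SF 0 = ∅ := by
  ext a; rw [mem_SF]; cases a <;> simp [Subst.size]

open Classical in
theorem sum_TF_succ (f : Tm → ℝ) (n : ℕ) :
    ∑ a ∈ TF (n + 1), f a = f (.idx n) + ∑ a ∈ TF n, f (.lam a)
      + ∑ p ∈ antidiagonal n, ∑ q ∈ TF p.1 ×ˢ TF p.2, f (.app q.1 q.2)
      + ∑ p ∈ antidiagonal n, ∑ q ∈ TF p.1 ×ˢ SF p.2, f (.clos q.1 q.2) := by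
  have hdec : TF (n + 1) = (({Tm.idx n} ∪ (TF n).image Tm.lam)
      ∪ (antidiagonal n).biUnion fun p => (TF p.1 ×ˢ TF p.2).image fun q => Tm.app q.1 q.2)
      ∪ (antidiagonal n).biUnion fun p => (TF p.1 ×ˢ SF p.2).image fun q => Tm.clos q.1 q.2 := by
    ext a
    cases a <;> simp [mem_TF, mem_SF, Tm.size]
  rw [hdec, sum_union, sum_union, sum_union, sum_singleton, sum_image, sum_biUnion, sum_biUnion]
  · congr 1
    · congr 1
      refine sum_congr rfl fun p _ => ?_
      rw [sum_image]
      rintro ⟨a, b⟩ _ ⟨c, d⟩ _ h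
      simpa using h
    · refine sum_congr rfl fun p _ => ?_
      rw [sum_image]
      rintro ⟨a, b⟩ _ ⟨c, d⟩ _ h
      simpa using h
  · rintro ⟨i, j⟩ _ ⟨k, l⟩ _ h
    rw [Function.onFun, Finset.disjoint_left]
    intro a h1 h2
    simp only [mem_image, mem_product, mem_TF, mem_SF] at h1 h2
    obtain ⟨q, hq, rfl⟩ := h1
    obtain ⟨q', hq', h3⟩ := h2
    simp only [Tm.clos.injEq] at h3
    apply h
    rw [← hq.1, ← hq.2, ← hq'.1, ← hq'.2, h3.1, h3.2]
  · rintro ⟨i, j⟩ _ ⟨k, l⟩ _ h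
    rw [Function.onFun, Finset.disjoint_left]
    intro a h1 h2
    simp only [mem_image, mem_product, mem_TF, mem_SF] at h1 h2
    obtain ⟨q, hq, rfl⟩ := h1
    obtain ⟨q', hq', h3⟩ := h2
    simp only [Tm.app.injEq] at h3
    apply h
    rw [← hq.1, ← hq.2, ← hq'.1, ← hq'.2, h3.1, h3.2]
  · intro a _ b _ h
    simpa using h
  · rw [Finset.disjoint_left]; intro a; cases a <;> simp
  · rw [Finset.disjoint_left]; intro a; cases a <;> simp
  · rw [Finset.disjoint_left]; intro a; cases a <;> simp

open Classical in
theorem card_SF_succ (n : ℕ) :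
    ((SF (n + 1)).card : ℝ) = (if n = 0 then 1 else 0) + (TF n).card + (SF n).card := by
  have hdec : SF (n + 1) = ((if n = 0 then {Subst.shift} else ∅) ∪ (TF n).image Subst.slash)
      ∪ (SF n).image Subst.lift := by
    ext a
    split_ifs with h0 <;> cases a <;> simp [mem_TF, mem_SF, Subst.size, h0]
  rw [hdec, card_union_of_disjoint, card_union_of_disjoint, card_image_of_injective,
    card_image_of_injective]
  · split_ifs <;> simp
  · intro a b h; simpa using h
  · intro a b h; simpa using h
  · rw [Finset.disjoint_left]; intro a; split_ifs <;> cases a <;> simp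
  · rw [Finset.disjoint_left]; intro a; split_ifs <;> cases a <;> simp

noncomputable def tt (n : ℕ) : ℝ := (TF n).card
noncomputable def ss (n : ℕ) : ℝ := (SF n).card
noncomputable def aa (n : ℕ) : ℝ := ∑ a ∈ TF n, (a.free : ℝ)

theorem tcount_eq (n : ℕ) : (tcount n : ℝ) = tt n := by
  unfold tcount tt
  congr 1
  rw [← Nat.card_eq_finsetCard]
  refine Nat.card_congr (Equiv.subtypeEquivRight fun a => ?_)
  simp [mem_TF]

theorem tt_succ (n : ℕ) : tt (n + 1) = 1 + tt n + ∑ p ∈ antidiagonal n, tt p.1 * tt p.2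
    + ∑ p ∈ antidiagonal n, tt p.1 * ss p.2 := by
  have := sum_TF_succ (fun _ => 1) n
  simpa [tt, ss] using this

theorem aa_succ (n : ℕ) : aa (n + 1) = (n + 1) + (aa n + tt n)
    + ∑ p ∈ antidiagonal n, (aa p.1 * tt p.2 + tt p.1 * aa p.2 + tt p.1 * tt p.2)
    + ∑ p ∈ antidiagonal n, (aa p.1 * ss p.2 + tt p.1 * ss p.2) := by
  have := sum_TF_succ (fun a => (a.free : ℝ)) n
  simp only [Tm.free] at this
  rw [aa, this]
  push_cast
  congr 1
  · congr 1
    · simp [aa, tt, sum_add_distrib]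
    · refine sum_congr rfl fun p _ => ?_
      simp only [sum_add_distrib, sum_product]
      simp [aa, tt, ← mul_sum]
      ring
  · refine sum_congr rfl fun p _ => ?_
    simp only [sum_add_distrib, sum_product]
    simp [aa, tt, ss, ← mul_sum]
    ring

theorem free_le (a : Tm) : a.free ≤ a.size := by
  induction a using Tm.rec (motive_2 := fun _ => True) <;> simp [Tm.free, Tm.size] <;> omega

theorem expect_eq (n : ℕ) : expectTm Tm.free n = aa n / tt n := by
  classical
  unfold expectTm
  rw [tcount_eq]
  congr 1
  have h1 : ∀ k, (Nat.card {a : Tm // a.size = n ∧ a.free = k}) =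
      ((TF n).filter fun a => a.free = k).card := by
    intro k
    rw [← Nat.card_eq_finsetCard]
    refine Nat.card_congr (Equiv.subtypeEquivRight fun a => ?_)
    simp [mem_TF]
  simp only [h1]
  unfold aa
  rw [← Finset.sum_fiberwise_of_maps_to (s := TF n) (t := range (n + 1)) (g := Tm.free)]
  · refine sum_congr rfl fun k _ => ?_
    rw [sum_congr rfl (g := fun _ => (k : ℝ))]
    · simp [mul_comm]
    · intro a ha
      rw [(mem_filter.1 ha).2]
  · intro a ha
    have := free_le a
    rw [mem_TF.1 ha] at this
    exact mem_range.2 (by omega)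

end LU

namespace LU
open PowerSeries in
theorem tt_catalan_series : (1 : ℝ⟦X⟧) + PowerSeries.mk tt = PowerSeries.mk (fun n => (catalan n : ℝ)) := by
  have hJ : (PowerSeries.mk 1 : ℝ⟦X⟧) * (1 - X) = 1 := mk_one_mul_one_sub_eq_one ℝ
  set J : ℝ⟦X⟧ := PowerSeries.mk 1 with hJd
  have hT : (PowerSeries.mk tt : ℝ⟦X⟧) = X * (J + PowerSeries.mk tt + PowerSeries.mk tt * PowerSeries.mk tt + PowerSeries.mk tt * PowerSeries.mk ss) := by
    ext n
    cases n with
    | zero => simp [tt, TF_zero]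
    | succ n =>
      rw [coeff_succ_X_mul]
      simp [coeff_mul, tt_succ, hJd]
  have hS : (PowerSeries.mk ss : ℝ⟦X⟧) = X * (1 + PowerSeries.mk tt + PowerSeries.mk ss) := by
    ext n
    cases n with
    | zero => simp [ss, SF_zero]
    | succ n =>
      rw [coeff_succ_X_mul]
      simp [coeff_one, tt, ss, card_SF_succ]
  set T : ℝ⟦X⟧ := PowerSeries.mk tt with hTd
  have hC : T = X * ((1 + T) * (1 + T)) := by
    linear_combination (1 - X) * hT + X * hJ + X * T * hS
  have h0 : coeff 0 (1 + T) = 1 := by simp [hTd, tt, TF_zero]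
  have hs : ∀ n, coeff (n + 1) (1 + T) = ∑ p ∈ antidiagonal n,
      coeff p.1 (1 + T) * coeff p.2 (1 + T) := by
    intro n
    rw [map_add, hC, coeff_succ_X_mul, ← hC, coeff_mul]
    simp [coeff_one]
  ext n
  rw [coeff_mk]
  induction n using Nat.strong_induction_on with
  | _ n ih =>
    cases n with
    | zero => rw [h0]; simp
    | succ n =>
      rw [hs, catalan_succ']
      push_cast
      refine sum_congr rfl fun p hp => ?_
      have := mem_antidiagonal.1 hp
      rw [ih _ (by omega), ih _ (by omega)]

noncomputable def cc (n : ℕ) : ℝ := catalan n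

noncomputable def Kf : ℕ → ℝ
  | 0 => 0
  | 1 => 2
  | n + 2 => 2 * cc (n + 1) - cc n + if n = 0 then 1 else 0

noncomputable def Nf : ℕ → ℝ
  | 0 => 0
  | 1 => 1
  | n + 2 => cc (n + 2) - cc (n + 1) + 1

theorem cc_zero : cc 0 = 1 := by simp [cc]
theorem cc_one : cc 1 = 1 := by simp [cc]

theorem tt_eq (n : ℕ) (hn : 1 ≤ n) : tt n = cc n := by
  have := congrArg (PowerSeries.coeff n) tt_catalan_series
  simpa [PowerSeries.coeff_one, cc, show n ≠ 0 by omega] using this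

open PowerSeries in
theorem mk_Kf : (PowerSeries.mk Kf : ℝ⟦X⟧) = X * (X + 2 * PowerSeries.mk cc - X * PowerSeries.mk cc) := by
  have h2 : (2 : ℝ⟦X⟧) = C (2 : ℝ) := (map_ofNat C 2).symm
  rw [h2]
  ext n
  match n with
  | 0 => simp [Kf]
  | 1 => rw [coeff_succ_X_mul]; simp [Kf, cc]
  | n + 2 =>
    rw [coeff_succ_X_mul, map_sub, map_add, coeff_succ_X_mul, coeff_C_mul]
    simp [Kf, coeff_X]
    ring

open PowerSeries in
theorem mk_Nf : (PowerSeries.mk Nf : ℝ⟦X⟧) = (1 - X) * (PowerSeries.mk cc - 1) + X * (X * PowerSeries.mk 1) := by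
  rw [sub_mul, one_mul]
  ext n
  match n with
  | 0 => simp [Nf, cc]
  | 1 => 
    rw [map_add, map_sub, coeff_succ_X_mul, coeff_succ_X_mul]; simp [Nf, cc, coeff_one]
  | n + 2 =>
    rw [map_add, map_sub, coeff_succ_X_mul, coeff_succ_X_mul, coeff_succ_X_mul]
    simp [Nf, coeff_one]

open PowerSeries in
theorem cc_series : (PowerSeries.mk cc : ℝ⟦X⟧) = 1 + X * (PowerSeries.mk cc * PowerSeries.mk cc) := by
  ext n
  cases n with
  | zero => simp [cc]
  | succ n =>
    rw [map_add, coeff_succ_X_mul, coeff_mul]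
    simp [cc, coeff_one, catalan_succ']

open PowerSeries in
theorem aa_series : (PowerSeries.mk aa : ℝ⟦X⟧) = PowerSeries.mk Nf + PowerSeries.mk aa * PowerSeries.mk Kf := by
  have hJ : (PowerSeries.mk 1 : ℝ⟦X⟧) * (1 - X) = 1 := mk_one_mul_one_sub_eq_one ℝ
  have hM : (PowerSeries.mk (fun n => (n : ℝ) + 1) : ℝ⟦X⟧) * (1 - X) = PowerSeries.mk 1 := by
    rw [mul_sub, mul_one, mul_comm _ X]
    ext n
    cases n with
    | zero => simp
    | succ n => rw [map_sub, coeff_succ_X_mul]; simp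
  have hA : (PowerSeries.mk aa : ℝ⟦X⟧) = X * (PowerSeries.mk (fun n => (n : ℝ) + 1) + (PowerSeries.mk aa + PowerSeries.mk tt)
      + (PowerSeries.mk aa * PowerSeries.mk tt + PowerSeries.mk tt * PowerSeries.mk aa + PowerSeries.mk tt * PowerSeries.mk tt) + (PowerSeries.mk aa * PowerSeries.mk ss + PowerSeries.mk tt * PowerSeries.mk ss)) := by
    ext n
    cases n with
    | zero => simp [aa, TF_zero]
    | succ n =>
      rw [coeff_succ_X_mul]
      simp [coeff_mul, aa_succ, sum_add_distrib]
  have hS : (PowerSeries.mk ss : ℝ⟦X⟧) = X * (1 + PowerSeries.mk tt + PowerSeries.mk ss) := by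
    ext n
    cases n with
    | zero => simp [ss, SF_zero]
    | succ n =>
      rw [coeff_succ_X_mul]
      simp [coeff_one, tt, ss, card_SF_succ]
  have hC : (1 : ℝ⟦X⟧) + PowerSeries.mk tt = PowerSeries.mk cc := tt_catalan_series
  have hCC := cc_series
  rw [mk_Kf, mk_Nf]
  have hT : (PowerSeries.mk tt : ℝ⟦X⟧) = PowerSeries.mk cc - 1 := by rw [← hC]; ring
  rw [hT] at hA hS
  generalize (PowerSeries.mk tt : ℝ⟦X⟧) = T at *
  generalize (PowerSeries.mk aa : ℝ⟦X⟧) = A at *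
  generalize (PowerSeries.mk cc : ℝ⟦X⟧) = C at *
  generalize (PowerSeries.mk ss : ℝ⟦X⟧) = S at *
  generalize (PowerSeries.mk (fun n => (n : ℝ) + 1) : ℝ⟦X⟧) = M at *
  generalize (PowerSeries.mk 1 : ℝ⟦X⟧) = J at *
  linear_combination (1 - X) * hA + X * hM + X * (A + C - 1) * hS - hCC + X * hJ

theorem aa_rec (n : ℕ) : aa n = Nf n + ∑ j ∈ range n, Kf (n - j) * aa j := by
  have h := congrArg (PowerSeries.coeff n) aa_series
  rw [map_add, PowerSeries.coeff_mul] at h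
  simp only [PowerSeries.coeff_mk] at h
  rw [Finset.Nat.sum_antidiagonal_eq_sum_range_succ (fun i j => aa i * Kf j), sum_range_succ] at h
  simp only [Nat.sub_self, Kf, mul_zero, add_zero] at h
  rw [h]
  congr 1
  exact sum_congr rfl fun j _ => mul_comm _ _

theorem cc_row (n : ℕ) : ∑ j ∈ range (n + 2), Kf (n + 2 - j) * cc j =
    cc n + 2 * cc (n + 2) - cc (n + 1) := by
  have h1 : (PowerSeries.mk cc * PowerSeries.mk Kf : PowerSeries ℝ) =
      PowerSeries.X * (PowerSeries.X * PowerSeries.mk cc) + (PowerSeries.mk cc - 1)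
      + (PowerSeries.mk cc - 1)
      - PowerSeries.X * (PowerSeries.mk cc - 1) := by
    rw [mk_Kf]
    linear_combination (PowerSeries.X - 2) * cc_series
  have h := congrArg (PowerSeries.coeff (n + 2)) h1
  rw [PowerSeries.coeff_mul] at h
  simp only [PowerSeries.coeff_mk] at h
  rw [Finset.Nat.sum_antidiagonal_eq_sum_range_succ (fun i j => cc i * Kf j), sum_range_succ] at h
  simp only [Nat.sub_self, show Kf 0 = 0 from rfl, mul_zero, add_zero, map_sub, map_add,
    PowerSeries.coeff_succ_X_mul, PowerSeries.coeff_mk] at h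
  have h' : ∑ j ∈ range (n + 2), Kf (n + 2 - j) * cc j =
      ∑ j ∈ range (n + 2), cc j * Kf (n + 2 - j) := sum_congr rfl fun j _ => mul_comm _ _
  rw [h', h]
  simp [PowerSeries.coeff_one]
  ring

theorem cc_pos (n : ℕ) : 0 < cc n := by
  have h := succ_mul_catalan_eq_centralBinom n
  have h2 := Nat.centralBinom_pos n
  rw [← h] at h2
  unfold cc
  exact_mod_cast Nat.pos_of_mul_pos_left h2

theorem cb_eq (n : ℕ) : (n.centralBinom : ℝ) = (n + 1) * cc n := by
  have h := succ_mul_catalan_eq_centralBinom n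
  unfold cc
  rw [← h]; push_cast; ring

theorem cc_succ (n : ℕ) : (n + 2) * cc (n + 1) = (4 * n + 2) * cc n := by
  have h : ((n : ℝ) + 1) * ((n + 1).centralBinom : ℝ) = 2 * (2 * n + 1) * n.centralBinom := by
    exact_mod_cast Nat.succ_mul_centralBinom_succ n
  rw [cb_eq, cb_eq] at h
  push_cast at h
  have h3 : ((n : ℝ) + 1) ≠ 0 := by positivity
  apply mul_left_cancel₀ h3
  linear_combination h

theorem cc_le (n : ℕ) : cc n ≤ cc (n + 1) := by
  have h := cc_succ n
  have := cc_pos n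
  have hn : (0 : ℝ) ≤ n := n.cast_nonneg
  by_contra hlt
  push Not at hlt
  have : (n + 2 : ℝ) * cc (n + 1) < (n + 2) * cc n := by gcongr
  nlinarith

theorem cc_ratio : Tendsto (fun n => cc n / cc (n + 1)) atTop (nhds (1 / 4)) := by
  have h : ∀ n : ℕ, cc n / cc (n + 1) = 1 / 4 + (3 / 8) * (1 / ((n : ℝ) + 1 / 2)) := by
    intro n
    have h1 := cc_pos (n + 1)
    have h2 := cc_succ n
    have hn : (0 : ℝ) ≤ n := n.cast_nonneg
    field_simp
    linear_combination (-16) * h2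
  simp only [h]
  have h3 : Tendsto (fun n : ℕ => (n : ℝ) + 1 / 2) atTop atTop :=
    tendsto_atTop_add_const_right _ _ tendsto_natCast_atTop_atTop
  have h4 := (h3.inv_tendsto_atTop.const_mul (3 / 8 : ℝ)).const_add (1 / 4)
  simpa using h4

theorem cc_ratio' (j : ℕ) : Tendsto (fun n => cc n / cc (n + j)) atTop (nhds ((1 / 4) ^ j)) := by
  induction j with
  | zero => simp [div_self (cc_pos _).ne']
  | succ j ih =>
    have h := ih.mul (cc_ratio.comp (tendsto_add_atTop_nat j))
    rw [pow_succ]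
    refine h.congr fun n => ?_
    have h1 := cc_pos (n + j)
    have h2 := cc_pos (n + j + 1)
    simp only [Function.comp]
    rw [← add_assoc]
    field_simp

/-- `1 / cc n → 0`. -/
theorem cc_inv : Tendsto (fun n => 1 / cc n) atTop (nhds 0) := by
  have h : ∀ n : ℕ, (n + 1 : ℝ) / 2 ≤ cc n := by
    intro n
    induction n with
    | zero => simp [cc]; norm_num
    | succ n ih =>
      rcases Nat.eq_zero_or_pos n with rfl | hpos
      · simp [cc]
      have h2 := cc_succ n
      have hn : (1 : ℝ) ≤ n := by exact_mod_cast hpos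
      have h3 : (n + 2 : ℝ) * ((n + 1 + 1) / 2) ≤ (n + 2) * cc (n + 1) := by
        rw [h2]; nlinarith
      push_cast
      exact le_of_mul_le_mul_left h3 (by positivity)
  have h3 : Tendsto (fun n : ℕ => ((n : ℝ) + 1) / 2) atTop atTop :=
    (tendsto_atTop_add_const_right _ _ tendsto_natCast_atTop_atTop).atTop_div_const (by norm_num)
  have := (tendsto_atTop_mono h h3).inv_tendsto_atTop
  refine this.congr fun n => ?_
  simp

theorem cc_sum : HasSum (fun n => cc n * (1 / 4) ^ n) 2 := by
  set d : ℕ → ℝ := fun n => (n + 1) * cc n * (1 / 4) ^ n with hd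
  have hd1 : ∀ n : ℕ, d (n + 1) = d n * ((2 * n + 1) / (2 * n + 2)) := by
    intro n
    have h2 := cc_succ n
    have hn : (0 : ℝ) ≤ n := n.cast_nonneg
    simp only [hd]
    push_cast
    rw [pow_succ]
    field_simp
    linear_combination 2 * h2
  have hd0 : ∀ n, 0 ≤ d n := fun n => by
    have := cc_pos n
    simp only [hd]; positivity
  have hdsq : ∀ n : ℕ, d n ^ 2 * (2 * n + 1) ≤ 1 := by
    intro n
    induction n with
    | zero => simp [hd, cc]
    | succ n ih =>
      have hn : (0 : ℝ) ≤ n := n.cast_nonneg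
      rw [hd1]
      refine le_trans ?_ ih
      push_cast
      rw [mul_pow, mul_assoc]
      refine mul_le_mul_of_nonneg_left ?_ (sq_nonneg _)
      rw [div_pow, div_mul_eq_mul_div, div_le_iff₀ (by positivity)]
      nlinarith
  have hlim : Tendsto d atTop (nhds 0) := by
    have h3 : Tendsto (fun n : ℕ => 2 * (n : ℝ) + 1) atTop atTop :=
      tendsto_atTop_add_const_right _ _
        (tendsto_natCast_atTop_atTop.const_mul_atTop (by norm_num))
    have h4 : Tendsto (fun n => d n ^ 2) atTop (nhds 0) := by
      refine squeeze_zero (fun n => sq_nonneg _) (fun n => ?_) h3.inv_tendsto_atTop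
      have hn : (0 : ℝ) ≤ n := n.cast_nonneg
      rw [Pi.inv_apply, ← one_div, le_div_iff₀ (by positivity)]
      exact hdsq n
    have h5 := (Real.continuous_sqrt.tendsto 0).comp h4
    rw [Real.sqrt_zero] at h5
    refine h5.congr fun n => ?_
    simp [Real.sqrt_sq (hd0 n)]
  rw [hasSum_iff_tendsto_nat_of_nonneg (fun n => by have := cc_pos n; positivity)]
  have hps : ∀ n, ∑ i ∈ range n, cc i * (1 / 4) ^ i = 2 - 2 * d n := by
    intro n
    induction n with
    | zero => simp [hd, cc]
    | succ n ih =>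
      rw [sum_range_succ, ih, hd1]
      simp only [hd]
      have hn : (0 : ℝ) ≤ n := n.cast_nonneg
      field_simp
      ring
  simp only [hps]
  simpa using (hlim.const_mul 2).const_sub 2

theorem cc_sum1 : HasSum (fun n => cc (n + 1) * (1 / 4) ^ (n + 1)) 1 := by
  rw [hasSum_nat_add_iff (f := fun n => cc n * (1 / 4) ^ n) 1]
  have e : (1 : ℝ) + ∑ i ∈ range 1, cc i * (1 / 4) ^ i = 2 := by
    simp [cc]; norm_num
  rw [e]
  exact cc_sum

theorem cc_sum2 : HasSum (fun n => cc (n + 2) * (1 / 4) ^ (n + 2)) (3 / 4) := by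
  rw [hasSum_nat_add_iff (f := fun n => cc n * (1 / 4) ^ n) 2]
  have e : (3 / 4 : ℝ) + ∑ i ∈ range 2, cc i * (1 / 4) ^ i = 2 := by
    simp [sum_range_succ, cc]; norm_num
  rw [e]
  exact cc_sum

theorem Kf_sum : HasSum (fun n => Kf n * (1 / 4) ^ n) (15 / 16) := by
  have h : HasSum (fun n => Kf (n + 2) * (1 / 4) ^ (n + 2)) (7 / 16) := by
    have h1 := ((cc_sum1.mul_left (1 / 2)).sub (cc_sum.mul_left (1 / 16))).add
      (hasSum_ite_eq 0 (1 / 16 : ℝ))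
    rw [show (1 / 2 * 1 - 1 / 16 * 2 + 1 / 16 : ℝ) = 7 / 16 by norm_num] at h1
    refine Eq.mp (congrArg (fun f : ℕ → ℝ => HasSum f _) (funext fun n => ?_)) h1
    by_cases hn : n = 0
    · subst hn; simp [Kf]; ring
    · simp only [Kf, hn, if_false]; ring
  rw [hasSum_nat_add_iff (f := fun n => Kf n * (1 / 4) ^ n) 2] at h
  have e : (7 / 16 : ℝ) + ∑ i ∈ range 2, Kf i * (1 / 4) ^ i = 15 / 16 := by
    simp [sum_range_succ, Kf]; norm_num
  rw [e] at h
  exact h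

theorem Nf_sum : HasSum (fun n => Nf n * (1 / 4) ^ n) (5 / 6) := by
  have h : HasSum (fun n => Nf (n + 2) * (1 / 4) ^ (n + 2)) (7 / 12) := by
    have h1 := (cc_sum2.sub (cc_sum1.mul_left (1 / 4))).add
      ((hasSum_geometric_of_lt_one (r := (1 / 4 : ℝ)) (by norm_num) (by norm_num)).mul_left (1 / 16))
    rw [show (3 / 4 - 1 / 4 * 1 + 1 / 16 * (1 - 1 / 4)⁻¹ : ℝ) = 7 / 12 by norm_num] at h1
    refine Eq.mp (congrArg (fun f : ℕ → ℝ => HasSum f _) (funext fun n => ?_)) h1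
    simp only [Nf]; ring
  rw [hasSum_nat_add_iff (f := fun n => Nf n * (1 / 4) ^ n) 2] at h
  have e : (7 / 12 : ℝ) + ∑ i ∈ range 2, Nf i * (1 / 4) ^ i = 5 / 6 := by
    simp [sum_range_succ, Nf]; norm_num
  rw [e] at h
  exact h

theorem Kf_nonneg (n : ℕ) : 0 ≤ Kf n := by
  match n with
  | 0 => simp [Kf]
  | 1 => simp [Kf]
  | n + 2 =>
    have h1 := cc_pos n
    have h2 := cc_le n
    have h3 : (0 : ℝ) ≤ if n = 0 then 1 else 0 := by split_ifs <;> norm_num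
    simp only [Kf]
    linarith

theorem w_col (j : ℕ) : Tendsto (fun n => Kf (n - j) * cc j / cc n) atTop
    (nhds (7 / 16 * (cc j * (1 / 4) ^ j))) := by
  rw [← tendsto_add_atTop_iff_nat (j + 2)]
  have h1 := (cc_ratio' (j + 1)).comp (tendsto_add_atTop_nat 1)
  have h2 := cc_ratio' (j + 2)
  have h3 := ((h1.const_mul 2).sub h2).mul_const (cc j)
  have e : (2 * (1 / 4 : ℝ) ^ (j + 1) - (1 / 4) ^ (j + 2)) * cc j
      = 7 / 16 * (cc j * (1 / 4) ^ j) := by ring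
  rw [e] at h3
  refine h3.congr' ?_
  filter_upwards [eventually_ge_atTop 1] with n hn
  have hp := cc_pos (n + (j + 2))
  simp only [Function.comp]
  rw [show n + (j + 2) - j = n + 2 by omega, show n + 1 + (j + 1) = n + (j + 2) by ring]
  simp only [Kf, show n ≠ 0 by omega, if_false]
  field_simp
  ring

theorem w_row : Tendsto (fun n => ∑ j ∈ range n, Kf (n - j) * cc j / cc n) atTop
    (nhds (15 / 16 + 7 / 16 * 2)) := by
  rw [← tendsto_add_atTop_iff_nat 2]
  have h1 := (cc_ratio' 1).comp (tendsto_add_atTop_nat 1)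
  have h2 := cc_ratio' 2
  have h3 := (h2.add_const 2).sub h1
  have e : (1 / 4 : ℝ) ^ 2 + 2 - (1 / 4) ^ 1 = 15 / 16 + 7 / 16 * 2 := by norm_num
  rw [e] at h3
  refine h3.congr fun n => ?_
  have hp := cc_pos (n + 2)
  rw [← Finset.sum_div, cc_row]
  simp only [Function.comp]
  rw [show n + 1 + 1 = n + 2 by ring]
  field_simp

theorem nu_lim : Tendsto (fun n => Nf n / cc n) atTop (nhds (3 / 4)) := by
  rw [← tendsto_add_atTop_iff_nat 2]
  have h1 := (cc_ratio' 1).comp (tendsto_add_atTop_nat 1)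
  have h3 := (h1.const_sub 1).add (cc_inv.comp (tendsto_add_atTop_nat 2))
  have e : 1 - (1 / 4 : ℝ) ^ 1 + 0 = 3 / 4 := by norm_num
  rw [e] at h3
  refine h3.congr fun n => ?_
  have hp := cc_pos (n + 2)
  simp only [Function.comp, Nf]
  rw [show n + 1 + 1 = n + 2 by ring]
  field_simp

theorem aa_div_lim : Tendsto (fun n => aa n / cc n) atTop (nhds (316 / 3)) := by
  obtain ⟨⟨M, hM⟩, hlim⟩ := renewal (fun n => aa n / cc n) (fun n => Nf n / cc n)
    (fun n j => Kf (n - j) * cc j / cc n) (fun j => 7 / 16 * (cc j * (1 / 4) ^ j))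
    (15 / 16) (7 / 16 * 2) (3 / 4)
    (fun n j _ => div_nonneg (mul_nonneg (Kf_nonneg _) (cc_pos _).le) (cc_pos _).le)
    w_col (cc_sum.mul_left _) w_row (by norm_num) (by norm_num) nu_lim
    (by
      intro n
      have hp := cc_pos n
      rw [aa_rec n, add_div, Finset.sum_div]
      congr 1
      refine sum_congr rfl fun j _ => ?_
      have hq := cc_pos j
      field_simp)
  have hMa : ∀ n, |aa n * (1 / 4) ^ n| ≤ M * (cc n * (1 / 4) ^ n) := by
    intro n
    have hp := cc_pos n
    have h := hM n
    rw [abs_div, abs_of_pos hp, div_le_iff₀ hp] at h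
    rw [abs_mul, abs_of_pos (show (0 : ℝ) < (1 / 4) ^ n by positivity), ← mul_assoc]
    exact mul_le_mul_of_nonneg_right h (by positivity)
  have hsa : Summable fun n => ‖aa n * (1 / 4) ^ n‖ :=
    Summable.of_nonneg_of_le (fun _ => norm_nonneg _) hMa (cc_sum.summable.mul_left M)
  have hsk : Summable fun n => ‖Kf n * (1 / 4) ^ n‖ := Kf_sum.summable.norm
  have hprod := tsum_mul_tsum_eq_tsum_sum_antidiagonal_of_summable_norm hsa hsk
  have hsp := (summable_norm_sum_mul_antidiagonal_of_summable_norm hsa hsk).of_norm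
  have hrec : ∀ n, aa n * (1 / 4) ^ n = Nf n * (1 / 4) ^ n + ∑ kl ∈ antidiagonal n,
      aa kl.1 * (1 / 4) ^ kl.1 * (Kf kl.2 * (1 / 4) ^ kl.2) := by
    intro n
    have h := congrArg (PowerSeries.coeff n) aa_series
    rw [map_add, PowerSeries.coeff_mul] at h
    simp only [PowerSeries.coeff_mk] at h
    rw [h, add_mul, Finset.sum_mul]
    congr 1
    refine sum_congr rfl fun p hp => ?_
    rw [← mem_antidiagonal.1 hp, pow_add]
    ring
  have hA : ∑' n, aa n * (1 / 4) ^ n = 40 / 3 := by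
    have h1 : ∑' n, aa n * (1 / 4 : ℝ) ^ n = ∑' n, (Nf n * (1 / 4 : ℝ) ^ n + ∑ kl ∈ antidiagonal n,
      aa kl.1 * (1 / 4) ^ kl.1 * (Kf kl.2 * (1 / 4) ^ kl.2)) := tsum_congr hrec
    rw [Nf_sum.summable.tsum_add hsp, ← hprod, Kf_sum.tsum_eq, Nf_sum.tsum_eq] at h1
    linarith
  have hsum : HasSum (fun n => aa n * (1 / 4 : ℝ) ^ n) (40 / 3) := hA ▸ hsa.of_norm.hasSum
  have hfin := hlim (7 / 16 * (40 / 3)) (by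
    have h := hsum.mul_left (7 / 16)
    refine Eq.mp (congrArg (fun f : ℕ → ℝ => HasSum f _) (funext fun n => ?_)) h
    have hq := cc_pos n
    field_simp)
  convert hfin using 2
  norm_num

end LU

/-- the expected number of non-suspended constructors tends to 316/3;
in particular the expected proportion of non-suspended constructors tends to 0. -/
theorem stmt12 :
    Tendsto (fun n : ℕ => expectTm Tm.free n) atTop (nhds (316 / 3)) ∧
      Tendsto (fun n : ℕ => expectTm Tm.free n / (n : ℝ)) atTop (nhds 0) := by
  have h : Tendsto (fun n : ℕ => expectTm Tm.free n) atTop (nhds (316 / 3)) := by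
    refine LU.aa_div_lim.congr' ?_
    filter_upwards [eventually_ge_atTop 1] with n hn
    rw [LU.expect_eq, LU.tt_eq n hn]
  exact ⟨h, h.div_atTop tendsto_natCast_atTop_atTop⟩
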